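/- Let G be a weighted marked graph over R and let v, w be unlooped twin vertices of G that are both unmarked and adjacent to each other. Let (G − w)' be the weighted marked graph obtained from G − w by marking v and changing the weights of v to α'(v) = α(v)α(w) and β'(v) = α(v)β(w) + β(v)α(w) + β(v)β(w)·d. Then [G] = [(G − w)']. -/

import Mathlib

/-!
The bracket sums are compared four subsets at a time. Each set `S` of vertices other than `v, w`
contributes the four subsets `S`, `S ∪ {v}`, `S ∪ {w}`, `S ∪ {v, w}` to `[G]` and the two subsets
`S`, `S ∪ {v}` to `[(G - w)']`, so it suffices to compare nullities (`WMG.nullity_eq`).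

View the kernel of `𝒜(G)_T` as a space of vectors `x` on all of `V` that vanish at the deleted
vertices. Because `v` and `w` are twins, the row of any other vertex only sees the sum
`x v + x w`. Replacing the pair `(x v, x w)` by `y v = x v + x w` and `t = x w` therefore turns the
equations away from the twins into those of `𝒜((G - w)')`. Write `L` for the pairing of `y` with the
row of `v` in `G - w`, and `a, b` for the indicators of `v ∈ T`, `w ∈ T`. The two remaining
equations are `L + t + a (y v + t) = 0` and `L + t + y v + b t = 0`, so that over `GF(2)`

* for `a = b = 0` they say `y v = 0` and `t = L`: the vertex `v` of the merged graph is deleted;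
* for `{a, b} = {0, 1}` they say `L + y v = 0` and determine `t`: `v` is kept and is looped;
* for `a = b = 1` they say `L + y v = 0` twice and leave `t` free: the nullity is one larger.

Nullities are read off from the cardinality `2 ^ ν` of the kernel (`WMG.two_pow_nullity`), so
bijections between the kernels are enough and linearity of the substitution is never needed.
-/

/-- A weighted marked graph over `R` with vertex type `V`: a symmetric adjacency
matrix over `GF(2)` (diagonal entries record loops), a finite set of marked
vertices, weight functions `alpha` and `beta`, and a number `phi` of free loops. -/
structure WMG (R : Type*) (V : Type*) where
  adj : Matrix V V (ZMod 2)
  symm : adj.IsSymm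
  marked : Finset V
  alpha : V → R
  beta : V → R
  phi : ℕ

namespace WMG

variable {R : Type*} {V : Type*}

/-- The matrix `𝒜(G)` with the diagonal entries at vertices of `T` toggled. -/
def adjT [DecidableEq V] (G : WMG R V) (T : Finset V) : Matrix V V (ZMod 2) :=
  Matrix.of fun i j => G.adj i j + if i = j ∧ i ∈ T then 1 else 0

/-- The vertices whose rows and columns survive in `𝒜(G)_T`: all vertices except
marked ones whose toggled diagonal entry is `0`. -/
def keep [Fintype V] [DecidableEq V] (G : WMG R V) (T : Finset V) : Finset V :=
  Finset.univ.filter fun x => ¬(x ∈ G.marked ∧ G.adjT T x x = 0)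

/-- The `GF(2)`-nullity of `𝒜(G)_T` (number of columns minus rank). -/
noncomputable def nullity [Fintype V] [DecidableEq V] (G : WMG R V) (T : Finset V) : ℕ :=
  Fintype.card {x // x ∈ G.keep T} -
    ((G.adjT T).submatrix (fun i : {x // x ∈ G.keep T} => i.1)
      (fun j : {x // x ∈ G.keep T} => j.1)).rank

/-- The weighted marked-graph bracket polynomial
`[G] = d^φ · Σ_T (∏_{v ∉ T} α v) (∏_{t ∈ T} β t) d^{ν(𝒜(G)_T)}`. -/
noncomputable def bracket [CommRing R] [Fintype V] [DecidableEq V]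
    (G : WMG R V) (d : Rˣ) : R :=
  (d : R) ^ G.phi *
    ∑ T : Finset V,
      (∏ x ∈ Tᶜ, G.alpha x) * (∏ t ∈ T, G.beta t) * (d : R) ^ G.nullity T

/-- Deletion of a set `S` of vertices (with all incident edges); all other data
unchanged. -/
def delete [DecidableEq V] (G : WMG R V) (S : Finset V) : WMG R {x : V // x ∉ S} where
  adj := G.adj.submatrix Subtype.val Subtype.val
  symm := G.symm.submatrix Subtype.val
  marked := G.marked.subtype fun x => x ∉ S
  alpha := fun x => G.alpha x.1
  beta := fun x => G.beta x.1
  phi := G.phi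

/-- Change the weights of the vertex `a` to `x` and `y`. -/
def reweight [DecidableEq V] (G : WMG R V) (a : V) (x y : R) : WMG R V :=
  { G with alpha := Function.update G.alpha a x, beta := Function.update G.beta a y }

/-- Mark the vertex `a` and change its weights to `x` and `y`. -/
def markReweight [DecidableEq V] (G : WMG R V) (a : V) (x y : R) : WMG R V :=
  { G with marked := insert a G.marked,
           alpha := Function.update G.alpha a x,
           beta := Function.update G.beta a y }

/-- The composition `F ∗ H` of two weighted marked graphs along the vertices
`aF` and `aH` (thought of as a single shared vertex `a`): the vertex set is the
disjoint union of `V(F) \ {a}` and `V(H) \ {a}`; loops, marks and weights are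
inherited; two vertices are adjacent iff they are adjacent in `F`, or in `H`,
or one is a neighbor of `a` in `F` and the other is a neighbor of `a` in `H`;
free loops add. -/
def comp {VF VH : Type*} [DecidableEq VF] [DecidableEq VH]
    (F : WMG R VF) (H : WMG R VH) (aF : VF) (aH : VH) :
    WMG R ({x : VF // x ≠ aF} ⊕ {y : VH // y ≠ aH}) where
  adj := Matrix.of fun p q =>
    match p, q with
    | Sum.inl x, Sum.inl x' => F.adj x.1 x'.1
    | Sum.inl x, Sum.inr y => F.adj x.1 aF * H.adj aH y.1
    | Sum.inr y, Sum.inl x => F.adj x.1 aF * H.adj aH y.1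
    | Sum.inr y, Sum.inr y' => H.adj y.1 y'.1
  symm := by
    refine Matrix.ext fun p q => ?_
    rcases p with x | y <;> rcases q with x' | y'
    · exact F.symm.apply x.1 x'.1
    · rfl
    · rfl
    · exact H.symm.apply y.1 y'.1
  marked := (F.marked.subtype fun x => x ≠ aF).disjSum (H.marked.subtype fun y => y ≠ aH)
  alpha := Sum.elim (fun x => F.alpha x.1) (fun y => H.alpha y.1)
  beta := Sum.elim (fun x => F.beta x.1) (fun y => H.beta y.1)
  phi := F.phi + H.phi

/-- The universal property of Theorem `pjoin` for `F` and `a`, with candidate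
weights `A = α'(a)`, `B = β'(a)`, `Am = α'(a_m)`: for every weighted marked
graph `H` sharing exactly the unlooped unmarked vertex `a` with `F`, in which
no neighbor of `a` is marked, `[F ∗ H] = [H'] + [H'_m]`. -/
def UnivProp {R : Type*} [CommRing R] {VF : Type u_v} [Fintype VF] [DecidableEq VF]
    (d : Rˣ) (F : WMG R VF) (a : VF) (A B Am : R) : Prop :=
  ∀ (VH : Type u_v) [Fintype VH] [DecidableEq VH] (H : WMG R VH) (aH : VH),
    H.adj aH aH = 0 → aH ∉ H.marked →
    (∀ y : VH, H.adj aH y = 1 → y ∉ H.marked) →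
    (F.comp H a aH).bracket d =
      (H.reweight aH A B).bracket d + (H.markReweight aH Am 0).bracket d

/-- The local complement `G^v`: toggle all entries of the adjacency matrix
(including diagonal ones) between members of the open neighborhood of `v`. -/
def localComp [DecidableEq V] (G : WMG R V) (v : V) : WMG R V where
  adj := Matrix.of fun a b =>
    G.adj a b + if (a ≠ v ∧ G.adj v a = 1) ∧ (b ≠ v ∧ G.adj v b = 1) then 1 else 0
  symm := by
    refine Matrix.ext fun a b => ?_
    have h : ((b ≠ v ∧ G.adj v b = 1) ∧ (a ≠ v ∧ G.adj v a = 1)) ↔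
        ((a ≠ v ∧ G.adj v a = 1) ∧ (b ≠ v ∧ G.adj v b = 1)) := and_comm
    simp only [Matrix.transpose_apply, Matrix.of_apply]
    rw [G.symm.apply a b, if_congr h rfl rfl]
  marked := G.marked
  alpha := G.alpha
  beta := G.beta
  phi := G.phi

/-- The condition for the pivot `G^{vw}` to toggle the adjacency between `a`
and `b`: `a` and `b` are distinct and (in one order or the other) `a ∈ N(v)`,
`b ∈ N(w)`, and `a ∉ N(w)` or `b ∉ N(v)`. -/
def pivCond [DecidableEq V] (G : WMG R V) (v w a b : V) : Prop :=
  a ≠ b ∧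
    (((a ≠ v ∧ G.adj v a = 1) ∧ (b ≠ w ∧ G.adj w b = 1) ∧
        (¬(a ≠ w ∧ G.adj w a = 1) ∨ ¬(b ≠ v ∧ G.adj v b = 1))) ∨
     ((b ≠ v ∧ G.adj v b = 1) ∧ (a ≠ w ∧ G.adj w a = 1) ∧
        (¬(b ≠ w ∧ G.adj w b = 1) ∨ ¬(a ≠ v ∧ G.adj v a = 1))))

instance pivCond_decidable [DecidableEq V] (G : WMG R V) (v w a b : V) :
    Decidable (pivCond G v w a b) := by
  unfold pivCond; infer_instance

lemma pivCond_comm [DecidableEq V] (G : WMG R V) (v w a b : V) :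
    pivCond G v w a b ↔ pivCond G v w b a := by
  unfold pivCond
  constructor <;> rintro ⟨h1, h2⟩ <;> exact ⟨Ne.symm h1, h2.symm⟩

/-- The pivot `G^{vw}`. -/
def pivot [DecidableEq V] (G : WMG R V) (v w : V) : WMG R V where
  adj := Matrix.of fun a b => G.adj a b + if pivCond G v w a b then 1 else 0
  symm := by
    refine Matrix.ext fun a b => ?_
    simp only [Matrix.transpose_apply, Matrix.of_apply]
    rw [G.symm.apply a b, if_congr (pivCond_comm G v w b a) rfl rfl]
  marked := G.marked
  alpha := G.alpha
  beta := G.beta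
  phi := G.phi

/-- The marked pivot `G_c^{vw}`: perform the pivot `G^{vw}`, then interchange
the neighborhoods of `v` and `w` (leaving loops unchanged) and toggle the
marks on `v` and `w`. -/
def markedPivot [DecidableEq V] (G : WMG R V) (v w : V) : WMG R V where
  adj := Matrix.of fun a b =>
    if a = b then (G.pivot v w).adj a b
    else (G.pivot v w).adj (Equiv.swap v w a) (Equiv.swap v w b)
  symm := by
    refine Matrix.ext fun a b => ?_
    simp only [Matrix.transpose_apply, Matrix.of_apply]
    by_cases h : a = b
    · subst h; simp
    · rw [if_neg fun hh => h hh.symm, if_neg h]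
      exact (G.pivot v w).symm.apply _ _
  marked := (G.marked \ {v, w}) ∪ (({v, w} : Finset V) \ G.marked)
  alpha := G.alpha
  beta := G.beta
  phi := G.phi

/-- The bordered version of `𝒜(F − a)_T`: adjoin the row and column recording
adjacency to `a` in `F`, with corner entry `c`; `borderedNullity` is its
`GF(2)`-nullity. -/
noncomputable def borderedNullity {VF : Type*} [Fintype VF] [DecidableEq VF]
    (F : WMG R VF) (a : VF) (T : Finset {x : VF // x ∉ ({a} : Finset VF)})
    (c : ZMod 2) : ℕ :=
  Fintype.card (Option {x // x ∈ (F.delete {a}).keep T}) -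
    (Matrix.of (fun p q =>
      match p, q with
      | some i, some j => (F.delete {a}).adjT T i.1 j.1
      | some i, none => F.adj i.1.1 a
      | none, some j => F.adj j.1.1 a
      | none, none => c) :
      Matrix (Option {x // x ∈ (F.delete {a}).keep T})
        (Option {x // x ∈ (F.delete {a}).keep T}) (ZMod 2)).rank

end WMG

namespace WMG

/-! ### Nullity as the size of a kernel -/

/-- The vectors indexed by `V` that vanish off `K` and are killed by the rows of `A` in `K`:
the kernel of the principal submatrix `A[K]`, extended by zero so that kernels for different `K`
live in the same space. -/
def Sol {V : Type*} [Fintype V] (A : Matrix V V (ZMod 2)) (K : Finset V) (x : V → ZMod 2) : Prop :=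
  ∀ i, (i ∈ K → ∑ j, A i j * x j = 0) ∧ (i ∉ K → x i = 0)

theorem sum_sub_of_zero {V : Type*} [Fintype V] [DecidableEq V] (K : Finset V)
    (f : V → ZMod 2) (h : ∀ i, i ∉ K → f i = 0) :
    ∑ j : {x // x ∈ K}, f j.1 = ∑ j, f j := by
  rw [Finset.sum_coe_sort K f]
  exact Finset.sum_subset (Finset.subset_univ _) fun i _ hi => h i hi

theorem card_sol {V : Type*} [Fintype V] [DecidableEq V] (A : Matrix V V (ZMod 2)) (K : Finset V) :
    Nat.card {x // Sol A K x} = 2 ^ (Fintype.card {x // x ∈ K} -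
      (A.submatrix (fun i : {x // x ∈ K} => i.1) (fun j : {x // x ∈ K} => j.1)).rank) := by
  set B := A.submatrix (fun i : {x // x ∈ K} => i.1) (fun j : {x // x ∈ K} => j.1) with hB
  have h1 : Nat.card (LinearMap.ker B.mulVecLin) =
      2 ^ (Fintype.card {x // x ∈ K} - B.rank) := by
    rw [Module.natCard_eq_pow_finrank (K := ZMod 2), Nat.card_zmod]
    congr 1
    have := B.mulVecLin.finrank_range_add_finrank_ker
    rw [Module.finrank_fintype_fun_eq_card] at this
    unfold Matrix.rank
    omega
  rw [← h1]
  refine Nat.card_congr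
    { toFun := fun x => ⟨fun i => x.1 i.1, ?_⟩
      invFun := fun y => ⟨fun i => if h : i ∈ K then y.1 ⟨i, h⟩ else 0, ?_⟩
      left_inv := ?_
      right_inv := ?_ }
  · rw [LinearMap.mem_ker]
    ext i
    have := (x.2 i.1).1 i.2
    rw [← sum_sub_of_zero K (fun j => A i.1 j * x.1 j)
      fun j hj => by simp [(x.2 j).2 hj]] at this
    simpa [Matrix.mulVec, dotProduct, hB] using this
  · intro i
    refine ⟨fun hi => ?_, fun hi => by simp [hi]⟩
    have := congrFun (LinearMap.mem_ker.1 y.2) ⟨i, hi⟩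
    rw [← sum_sub_of_zero K _ fun j hj => by simp [hj]]
    refine Eq.trans (Finset.sum_congr rfl fun j _ => ?_) this
    simp [hB]
  · intro x
    ext i
    by_cases h : i ∈ K
    · simp [h]
    · simp [h, (x.2 i).2 h]
  · intro y
    ext i
    simp

theorem two_pow_nullity {R V : Type*} [Fintype V] [DecidableEq V] (G : WMG R V) (T : Finset V) :
    2 ^ G.nullity T = Nat.card {x // Sol (G.adjT T) (G.keep T) x} :=
  (card_sol _ _).symm

theorem adjT_row {R V : Type*} [Fintype V] [DecidableEq V] (G : WMG R V) (T : Finset V)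
    (x : V → ZMod 2) (i : V) :
    ∑ j, G.adjT T i j * x j = ∑ j, G.adj i j * x j + if i ∈ T then x i else 0 := by
  simp only [adjT, Matrix.of_apply, add_mul, Finset.sum_add_distrib]
  congr 1
  rw [Finset.sum_eq_single i] <;> simp +contextual [eq_comm]

/-! ### Merging the coordinates of the twins -/

/-- Merging the coordinates of `v` and `w` into their sum at `v`, with the `w` coordinate
recorded separately. -/
def mergeEquiv {V : Type*} [DecidableEq V] (v w : V) (hvw : v ≠ w) :
    (V → ZMod 2) ≃ ({x : V // x ∉ ({w} : Finset V)} → ZMod 2) × ZMod 2 where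
  toFun x := (fun i => x i.1 + if i.1 = v then x w else 0, x w)
  invFun p := fun i =>
    if h : i ∉ ({w} : Finset V) then p.1 ⟨i, h⟩ + if i = v then p.2 else 0 else p.2
  left_inv x := by
    ext i
    by_cases h : i = w
    · simp [h]
    · by_cases h' : i = v
      · subst h'
        simp [h, add_assoc, CharTwo.add_self_eq_zero]
      · simp [h, h']
  right_inv p := by
    ext i
    · have : i.1 ≠ w := by simpa using i.2
      by_cases h' : i.1 = v
      · have e : i = ⟨v, by simpa using hvw⟩ := Subtype.ext h'
        subst e
        simp [hvw, add_assoc, CharTwo.add_self_eq_zero]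
      · simp [h', this]
    · simp

theorem sum_split {M V : Type*} [AddCommMonoid M] [Fintype V] [DecidableEq V] (w : V) (f : V → M) :
    ∑ j, f j = f w + ∑ j : {x : V // x ∉ ({w} : Finset V)}, f j.1 := by
  rw [Fintype.sum_eq_add_sum_subtype_ne f w]
  congr 1
  exact Fintype.sum_equiv (Equiv.subtypeEquivRight (by simp)) _ _ (fun _ => rfl)

section twins

variable {R V : Type*} [Fintype V] [DecidableEq V] (G : WMG R V) (v w : V)
  (G' : WMG R {x : V // x ∉ ({w} : Finset V)})

/-- A row of `G - w` applied to the merged vector. For `i ≠ v` the twins have equal entries in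
row `i`, so the correction term vanishes over `GF(2)`. -/
theorem row_merge (hvw : v ≠ w) (hadj' : G'.adj = (G.delete {w}).adj) (x : V → ZMod 2)
    (i : {x : V // x ∉ ({w} : Finset V)}) :
    ∑ j, G'.adj i j * (mergeEquiv v w hvw x).1 j =
      ∑ j, G.adj i.1 j * x j + (G.adj i.1 v + G.adj i.1 w) * x w := by
  have h : ∀ j, G'.adj i j * (mergeEquiv v w hvw x).1 j =
      G.adj i.1 j.1 * x j.1 + if j = ⟨v, by simpa using hvw⟩ then G.adj i.1 v * x w else 0 := by
    intro j
    rw [hadj']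
    simp only [mergeEquiv, delete, Equiv.coe_fn_mk, Matrix.submatrix_apply, Subtype.ext_iff]
    split_ifs with h
    · rw [h]; ring
    · ring
  simp only [h, Finset.sum_add_distrib, sum_split w (fun j => G.adj i.1 j * x j)]
  rw [Finset.sum_ite_eq']
  simp only [Finset.mem_univ, if_true]
  linear_combination (-G.adj i.1 w * x w) * (CharTwo.two_eq_zero : (2 : ZMod 2) = 0)

/-- The equations of `Sol` for `𝒜(G')_S` other than the one at `v`. -/
def Rest (S : Finset {x : V // x ∉ ({w} : Finset V)})
    (y : {x : V // x ∉ ({w} : Finset V)} → ZMod 2) : Prop :=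
  ∀ i, i.1 ≠ v → (i ∈ G'.keep S → ∑ j, G'.adjT S i j * y j = 0) ∧ (i ∉ G'.keep S → y i = 0)

/-- The kernel equations of `𝒜(G)_T` in merged coordinates `(y, t)`: the equations of `G'` away
from `v`, followed by those in rows `v` and `w`. Here `L` is row `v` of `G'` applied to `y`. -/
theorem sol_iff (hvw : v ≠ w)
    (hloopv : G.adj v v = 0) (hloopw : G.adj w w = 0)
    (htwin : ∀ x : V, x ≠ v → x ≠ w → G.adj v x = G.adj w x)
    (hmv : v ∉ G.marked) (hmw : w ∉ G.marked) (hadj : G.adj v w = 1)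
    (hadj' : G'.adj = (G.delete {w}).adj)
    (hmarked' : ∀ x : {x : V // x ∉ ({w} : Finset V)},
      x ∈ G'.marked ↔ ((x : V) = v ∨ (x : V) ∈ G.marked))
    (T : Finset V) (S : Finset {x : V // x ∉ ({w} : Finset V)})
    (hTS : ∀ i : {x : V // x ∉ ({w} : Finset V)}, i.1 ≠ v → (i ∈ S ↔ i.1 ∈ T))
    (x : V → ZMod 2) (y : {x : V // x ∉ ({w} : Finset V)} → ZMod 2) (t : ZMod 2)
    (hx : mergeEquiv v w hvw x = (y, t))
    (L : ZMod 2) (hL : L = ∑ j, G'.adj ⟨v, by simpa using hvw⟩ j * y j)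
    (z : ZMod 2) (hz : z = y ⟨v, by simpa using hvw⟩) :
    Sol (G.adjT T) (G.keep T) x ↔
      Rest v w G' S y ∧ L + t + (if v ∈ T then z + t else 0) = 0 ∧
        L + t + z + (if w ∈ T then t else 0) = 0 := by
  have hy : y = (mergeEquiv v w hvw x).1 := by rw [hx]
  have hxw : x w = t := congrArg Prod.snd hx
  have hxv : x v = z + t := by
    rw [hz, hy, ← hxw]
    simp [mergeEquiv, add_assoc, CharTwo.add_self_eq_zero]
  have hxi : ∀ i : {x : V // x ∉ ({w} : Finset V)}, i.1 ≠ v → y i = x i.1 := by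
    intro i hi; rw [hy]; simp [mergeEquiv, hi]
  have hrow := row_merge G v w G' hvw hadj' x
  rw [← hy, hxw] at hrow
  have hsymm : ∀ a b, G.adj a b = G.adj b a := fun a b => G.symm.apply b a
  have hLv : ∑ j, G.adj v j * x j = L + t := by
    rw [hL, hrow, hloopv, hadj]
    linear_combination (-t) * (CharTwo.two_eq_zero : (2 : ZMod 2) = 0)
  -- The rows of the twins differ only in the columns of the twins themselves.
  have hLw : ∑ j, G.adj w j * x j = L + t + z := by
    have e : ∀ j, G.adj w j * x j = G.adj v j * x j +
        ((if j = v then x v else 0) + (if j = w then x w else 0)) := by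
      intro j
      by_cases h1 : j = v
      · subst h1; rw [hsymm w j, hadj, hloopv]; simp [hvw]
      · by_cases h2 : j = w
        · subst h2; rw [hadj, hloopw]; simp [h1, CharTwo.add_self_eq_zero]
        · simp [h1, h2, htwin j h1 h2]
    simp only [e, Finset.sum_add_distrib, hLv, Finset.sum_ite_eq', Finset.mem_univ, if_true,
      hxv, hxw]
    linear_combination t * (CharTwo.two_eq_zero : (2 : ZMod 2) = 0)
  have hi : ∀ i : {x : V // x ∉ ({w} : Finset V)}, i.1 ≠ v →
      (i ∈ G'.keep S ↔ i.1 ∈ G.keep T) ∧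
      ∑ j, G'.adjT S i j * y j = ∑ j, G.adjT T i.1 j * x j := by
    intro i hi
    have hiw : i.1 ≠ w := by simpa using i.2
    constructor
    · simp [keep, adjT, hmarked', hi, hadj', delete, hTS i hi]
    · rw [adjT_row, adjT_row, hrow, hxi i hi, hsymm i v, hsymm i w, htwin i hi hiw,
        CharTwo.add_self_eq_zero]
      simp [hTS i hi]
  have kv : v ∈ G.keep T := by simp [keep, hmv]
  have kw : w ∈ G.keep T := by simp [keep, hmw]
  constructor
  · intro h
    refine ⟨fun i hiv => ?_, ?_, ?_⟩
    · rw [(hi i hiv).1, (hi i hiv).2, hxi i hiv]; exact h i.1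
    · have := (h v).1 kv
      rwa [adjT_row, hLv, hxv] at this
    · have := (h w).1 kw
      rwa [adjT_row, hLw, hxw] at this
  · rintro ⟨h, h1, h2⟩ i
    by_cases hiv : i = v
    · subst hiv
      refine ⟨fun _ => ?_, fun h => absurd kv h⟩
      rwa [adjT_row, hLv, hxv]
    by_cases hiw : i = w
    · subst hiw
      refine ⟨fun _ => ?_, fun h => absurd kw h⟩
      rwa [adjT_row, hLw, hxw]
    · have := h ⟨i, by simpa using hiw⟩ hiv
      rwa [(hi _ hiv).1, (hi _ hiv).2, hxi _ hiv] at this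

/-- In `G'` the unlooped marked vertex `v` is deleted unless `S` toggles it, so its equation is
either `y v = 0` or the equation of a looped row. -/
theorem sol_iff' (hvw : v ≠ w) (hloopv : G.adj v v = 0)
    (hadj' : G'.adj = (G.delete {w}).adj)
    (hmarked' : ∀ x : {x : V // x ∉ ({w} : Finset V)},
      x ∈ G'.marked ↔ ((x : V) = v ∨ (x : V) ∈ G.marked))
    (S : Finset {x : V // x ∉ ({w} : Finset V)})
    (y : {x : V // x ∉ ({w} : Finset V)} → ZMod 2)
    (L : ZMod 2) (hL : L = ∑ j, G'.adj ⟨v, by simpa using hvw⟩ j * y j)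
    (z : ZMod 2) (hz : z = y ⟨v, by simpa using hvw⟩) :
    Sol (G'.adjT S) (G'.keep S) y ↔
      Rest v w G' S y ∧ if ⟨v, by simpa using hvw⟩ ∈ S then L + z = 0 else z = 0 := by
  have kv : ⟨v, by simpa using hvw⟩ ∈ G'.keep S ↔ ⟨v, by simpa using hvw⟩ ∈ S := by
    simp [keep, adjT, hmarked', hadj', delete, hloopv]
  have key : (if ⟨v, by simpa using hvw⟩ ∈ S then L + z = 0 else z = 0) ↔
      ((⟨v, by simpa using hvw⟩ ∈ G'.keep S →
        ∑ j, G'.adjT S ⟨v, by simpa using hvw⟩ j * y j = 0) ∧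
      (⟨v, by simpa using hvw⟩ ∉ G'.keep S → y ⟨v, by simpa using hvw⟩ = 0)) := by
    rw [kv, adjT_row, ← hL, ← hz]
    split_ifs with h <;> simp [h]
  rw [key]
  constructor
  · exact fun h => ⟨fun i _ => h i, h _⟩
  · rintro ⟨h, h1⟩ i
    by_cases hiv : i.1 = v
    · have e : i = ⟨v, by simpa using hvw⟩ := Subtype.ext hiv
      rw [e]; exact h1
    · exact h i hiv

/-- The effect on nullity of removing `w` and marking `v`: the nullities agree, except that
toggling both twins gives one dimension more than toggling the merged vertex. -/
theorem nullity_eq (hvw : v ≠ w)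
    (hloopv : G.adj v v = 0) (hloopw : G.adj w w = 0)
    (htwin : ∀ x : V, x ≠ v → x ≠ w → G.adj v x = G.adj w x)
    (hmv : v ∉ G.marked) (hmw : w ∉ G.marked) (hadj : G.adj v w = 1)
    (hadj' : G'.adj = (G.delete {w}).adj)
    (hmarked' : ∀ x : {x : V // x ∉ ({w} : Finset V)},
      x ∈ G'.marked ↔ ((x : V) = v ∨ (x : V) ∈ G.marked))
    (T : Finset V) (S : Finset {x : V // x ∉ ({w} : Finset V)})
    (hTS : ∀ i : {x : V // x ∉ ({w} : Finset V)}, i.1 ≠ v → (i ∈ S ↔ i.1 ∈ T))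
    (hv : ⟨v, by simpa using hvw⟩ ∈ S ↔ v ∈ T ∨ w ∈ T) :
    G.nullity T = G'.nullity S + if v ∈ T ∧ w ∈ T then 1 else 0 := by
  apply Nat.pow_right_injective (le_refl 2)
  simp only
  rw [pow_add, two_pow_nullity, two_pow_nullity]
  let L : ({x : V // x ∉ ({w} : Finset V)} → ZMod 2) → ZMod 2 :=
    fun y => ∑ j, G'.adj ⟨v, by simpa using hvw⟩ j * y j
  have e1 : {x // Sol (G.adjT T) (G.keep T) x} ≃
      {p : ({x : V // x ∉ ({w} : Finset V)} → ZMod 2) × ZMod 2 //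
        Sol (G'.adjT S) (G'.keep S) p.1 ∧
          (¬ (v ∈ T ∧ w ∈ T) → p.2 = if w ∈ T ∨ v ∉ T then L p.1 else 0)} := by
    refine (mergeEquiv v w hvw).subtypeEquiv fun x => ?_
    rw [sol_iff G v w G' hvw hloopv hloopw htwin hmv hmw hadj hadj' hmarked' T S hTS x
      (mergeEquiv v w hvw x).1 (mergeEquiv v w hvw x).2 rfl _ rfl _ rfl,
      sol_iff' G v w G' hvw hloopv hadj' hmarked' S _ _ rfl _ rfl, and_assoc]
    refine and_congr_right fun _ => ?_
    change _ ↔ _ ∧ (_ → _ = if _ then ∑ j, G'.adj _ j * (mergeEquiv v w hvw x).1 j else 0)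
    -- What remains is a statement about three elements of `GF(2)` in each of four cases.
    generalize (∑ j, G'.adj ⟨v, _⟩ j * (mergeEquiv v w hvw x).1 j) = l
    generalize (mergeEquiv v w hvw x).1 ⟨v, _⟩ = z
    generalize (mergeEquiv v w hvw x).2 = t
    simp only [hv]
    by_cases h1 : v ∈ T <;> by_cases h2 : w ∈ T <;> simp only [h1, h2] <;> revert l z t <;> decide
  rw [Nat.card_congr e1]
  by_cases h : v ∈ T ∧ w ∈ T
  · simp only [h, not_true_eq_false, false_imp_iff, and_true, and_self, if_true, pow_one]
    rw [Nat.card_congr (Equiv.subtypeProdEquivProd (p := Sol (G'.adjT S) (G'.keep S))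
      (q := fun _ : ZMod 2 => True)
      |>.symm.trans (Equiv.subtypeEquivRight (by simp))).symm, Nat.card_prod]
    simp
  · simp only [h, not_false_eq_true, true_imp_iff, if_false, pow_zero, mul_one]
    exact Nat.card_congr
      { toFun := fun p => ⟨p.1.1, p.2.1⟩
        invFun := fun y => ⟨(y.1, if w ∈ T ∨ v ∉ T then L y.1 else 0), y.2, rfl⟩
        left_inv := fun p => Subtype.ext (Prod.ext rfl p.2.2.symm)
        right_inv := fun y => rfl }

end twins

/-! ### Organising the sum over subsets -/

/-- The product of weights attached to `T`, as a single product over all vertices. -/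
theorem weight_eq {R V : Type*} [CommRing R] [Fintype V] [DecidableEq V] (f g : V → R)
    (T : Finset V) :
    (∏ x ∈ Tᶜ, f x) * ∏ x ∈ T, g x = ∏ x, if x ∈ T then g x else f x := by
  rw [Finset.prod_ite, mul_comm]
  congr 1 <;> exact Finset.prod_congr (by ext; simp) fun _ _ => rfl

/-- A sum over subsets, organised by the trace of the subset on the complement of `a`. -/
theorem sum_finset_split {M V : Type*} [AddCommMonoid M] [Fintype V] [DecidableEq V] (a : V)
    (f : Finset V → M) :
    ∑ T, f T = ∑ T ∈ ({a}ᶜ : Finset V).powerset, (f T + f (insert a T)) := by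
  rw [Finset.sum_add_distrib, ← Finset.sum_powerset_insert (by simp)]
  refine Finset.sum_congr ?_ fun _ _ => rfl
  ext T
  simp

theorem sum_finset_subtype {M V : Type*} [AddCommMonoid M] [Fintype V] [DecidableEq V] (a : V)
    (f : Finset V → M) :
    ∑ T ∈ ({a}ᶜ : Finset V).powerset, f T =
      ∑ S : Finset {x : V // x ∉ ({a} : Finset V)}, f (S.map (Function.Embedding.subtype _)) := by
  refine Finset.sum_bij' (fun T _ => T.subtype _) (fun S _ => S.map (Function.Embedding.subtype _))
    (by simp) ?_ ?_ ?_ ?_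
  · intro S _
    simp +contextual [Finset.subset_iff]
  · intro T hT
    rw [Finset.subtype_map, Finset.filter_true_of_mem]
    intro x hx
    simpa using Finset.mem_powerset.1 hT hx
  · intro S _
    ext x
    have : x.1 ≠ a := by simpa using x.2
    simp [this]
  · intro T hT
    congr 1
    rw [Finset.subtype_map, Finset.filter_true_of_mem]
    intro x hx
    simpa using Finset.mem_powerset.1 hT hx

end WMG

theorem unmarked_adjacent_twins {R : Type*} [CommRing R] (d : Rˣ) {V : Type*} [Fintype V] [DecidableEq V]
    (G : WMG R V) (v w : V) (hvw : v ≠ w)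
    (hloopv : G.adj v v = 0) (hloopw : G.adj w w = 0)
    (htwin : ∀ x : V, x ≠ v → x ≠ w → G.adj v x = G.adj w x)
    (hmv : v ∉ G.marked) (hmw : w ∉ G.marked) (hadj : G.adj v w = 1)
    (G' : WMG R {x : V // x ∉ ({w} : Finset V)})
    (hadj' : G'.adj = (G.delete {w}).adj)
    (hphi' : G'.phi = G.phi)
    (hmarked' : ∀ x : {x : V // x ∉ ({w} : Finset V)}, x ∈ G'.marked ↔ ((x : V) = v ∨ (x : V) ∈ G.marked))
    (halpha' : ∀ x : {x : V // x ∉ ({w} : Finset V)}, G'.alpha x =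
        if (x : V) = v then G.alpha v * G.alpha w else G.alpha x)
    (hbeta' : ∀ x : {x : V // x ∉ ({w} : Finset V)}, G'.beta x =
        if (x : V) = v then G.alpha v * G.beta w + G.beta v * G.alpha w + G.beta v * G.beta w * (d : R) else G.beta x) :
    G.bracket d = G'.bracket d := by
  classical
  have hv' : v ∉ ({w} : Finset V) := by simpa using hvw
  unfold WMG.bracket
  rw [hphi']
  congr 1
  simp only [WMG.weight_eq]
  rw [WMG.sum_finset_split w, WMG.sum_finset_subtype w, WMG.sum_finset_split ⟨v, hv'⟩,
    WMG.sum_finset_split ⟨v, hv'⟩]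
  refine Finset.sum_congr rfl fun S hS => ?_
  have hvS : (⟨v, hv'⟩ : {x : V // x ∉ ({w} : Finset V)}) ∉ S := fun h => by
    simpa using Finset.mem_powerset.1 hS h
  set E := Function.Embedding.subtype (fun x : V => x ∉ ({w} : Finset V)) with hE
  have hN := WMG.nullity_eq G v w G' hvw hloopv hloopw htwin hmv hmw hadj hadj' hmarked'
  have hmem : ∀ i : {x : V // x ∉ ({w} : Finset V)}, i.1 ∈ S.map E ↔ i ∈ S := by
    intro i
    have : i.1 ≠ w := by simpa using i.2
    simp [hE, this]
  have hvT : v ∉ S.map E := fun h => hvS ((hmem ⟨v, hv'⟩).1 h)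
  have hwT : w ∉ S.map E := by simp [hE]
  have hne : ∀ i : {x : V // x ∉ ({w} : Finset V)}, i.1 ≠ w := fun i => by simpa using i.2
  have n1 := hN (S.map E) S (fun i _ => (hmem i).symm) (by simp [hvS, hvT, hwT])
  have n2 := hN (insert w (S.map E)) (insert ⟨v, hv'⟩ S)
    (fun i hi => by simp [hmem, Subtype.ext_iff, hi, hne]) (by simp)
  have n3 := hN (insert v (S.map E)) (insert ⟨v, hv'⟩ S)
    (fun i hi => by simp [hmem, Subtype.ext_iff, hi]) (by simp)
  have n4 := hN (insert w (insert v (S.map E))) (insert ⟨v, hv'⟩ S)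
    (fun i hi => by simp [hmem, Subtype.ext_iff, hi, hne]) (by simp)
  simp only [Finset.mem_insert, hvT, hwT, hvw, hvw.symm, or_false, or_true, and_false, false_and,
    and_self, if_false, if_true, add_zero] at n1 n2 n3 n4
  -- The common factor: the weights of all vertices other than the twins.
  obtain ⟨P, hP⟩ : ∃ P : R, P = ∏ x ∈ ({v, w}ᶜ : Finset V),
    if x ∈ S.map E then G.beta x else G.alpha x := ⟨_, rfl⟩
  have hw1 : ∀ T : Finset V, (∀ x, x ≠ v → x ≠ w → (x ∈ T ↔ x ∈ S.map E)) →
      (∏ x, if x ∈ T then G.beta x else G.alpha x) =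
        (if v ∈ T then G.beta v else G.alpha v) * (if w ∈ T then G.beta w else G.alpha w) * P := by
    intro T hT
    rw [← Finset.prod_mul_prod_compl {v, w}, Finset.prod_pair hvw, hP]
    congr 1
    refine Finset.prod_congr rfl fun x hx => ?_
    simp only [Finset.mem_compl, Finset.mem_insert, Finset.mem_singleton, not_or] at hx
    rw [if_congr (hT x hx.1 hx.2) rfl rfl]
  have hw2 : ∀ U : Finset {x : V // x ∉ ({w} : Finset V)}, (∀ x, x.1 ≠ v → (x ∈ U ↔ x ∈ S)) →
      (∏ x, if x ∈ U then G'.beta x else G'.alpha x) =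
        (if ⟨v, hv'⟩ ∈ U then G'.beta ⟨v, hv'⟩ else G'.alpha ⟨v, hv'⟩) * P := by
    intro U hU
    rw [← Finset.prod_mul_prod_compl {⟨v, hv'⟩}, Finset.prod_singleton, hP]
    congr 1
    refine Finset.prod_bij (fun x _ => x.1) ?_ ?_ ?_ ?_
    · intro x hx
      have : x.1 ≠ v := by simpa [Subtype.ext_iff] using hx
      simp [this, hne]
    · exact fun _ _ _ _ h => Subtype.ext h
    · intro x hx
      simp only [Finset.mem_compl, Finset.mem_insert, Finset.mem_singleton, not_or] at hx
      exact ⟨⟨x, by simpa using hx.2⟩, by simpa using hx.1, rfl⟩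
    · intro x hx
      have : x.1 ≠ v := by simpa [Subtype.ext_iff] using hx
      rw [if_congr ((hU x this).trans (hmem x).symm) rfl rfl, hbeta', halpha', if_neg this,
        if_neg this]
  have hmapi : (insert ⟨v, hv'⟩ S).map E = insert v (S.map E) := by
    rw [Finset.map_insert]; rfl
  rw [hmapi, n1, n2, n3, n4, hw1 _ (fun _ _ _ => Iff.rfl),
    hw1 (insert w (S.map E)) (fun x _ h => by simp only [Finset.mem_insert, h, false_or]),
    hw1 (insert v (S.map E)) (fun x h _ => by simp only [Finset.mem_insert, h, false_or]),
    hw1 (insert w (insert v (S.map E)))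
      (fun x h h' => by simp only [Finset.mem_insert, h, h', false_or]),
    hw2 _ (fun _ _ => Iff.rfl),
    hw2 (insert ⟨v, hv'⟩ S) (fun x h => by simp [Subtype.ext_iff, h]), hbeta', halpha']
  simp only [Finset.mem_insert, hvT, hwT, hvS, hvw, hvw.symm, or_false, or_true, if_false, if_true]
  ring
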